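/- In the Coxeter setting below, let w ∈ W and set L_w = { s ∈ S : ℓ(σ_s w) < ℓ(w) } and R_w = { s ∈ S : ℓ(w σ_s) < ℓ(w) }, where ℓ is the length function. Then: (a) for every continuous path π : [0,T] → V with π(0) = 0 and every s ∈ L_w, one has α_s∨((P_w π)(t)) ≥ 0 for all t ∈ [0,T]; (b) P_{α_s} ∘ P_w = P_w for all s ∈ L_w; (c) P_w ∘ P_{α_s} = P_w for all s ∈ R_w. -/

import Mathlib

/-- The Pitman transform associated with a pair `(α, α∨)`:
`P_α π (t) = π t − (inf_{0 ≤ s ≤ t} α∨(π s)) • α`. -/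
noncomputable def pitman {V : Type*} [AddCommGroup V] [Module ℝ V]
    (α : V) (αv : Module.Dual ℝ V) (π : ℝ → V) : ℝ → V :=
  fun t => π t - sInf ((fun s => αv (π s)) '' Set.Icc 0 t) • α

/-- The composite Pitman transform `P_{α_{s₁}} ∘ ⋯ ∘ P_{α_{s_l}}` along a word
`l = [s₁, …, s_l]` in the generators. -/
noncomputable def pitmanWord {V : Type*} [AddCommGroup V] [Module ℝ V] {B : Type*}
    (α : B → V) (αv : B → Module.Dual ℝ V) (l : List B) : (ℝ → V) → (ℝ → V) :=
  l.foldr (fun s f => pitman (α s) (αv s) ∘ f) id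

/-!
By Matsumoto's theorem, `P_w` does not depend on the reduced word for `w` as soon as the Pitman
transforms satisfy the braid relations. A generator `s` of `L_w` starts some reduced word for `w`,
so that `P_w = P_{α_s} ∘ P_{w'}`, and one of `R_w` ends some reduced word. The theorem then follows
from `P_{α_s} ∘ P_{α_s} = P_{α_s}` and from the nonnegativity of `α_s∨` along the values of
`P_{α_s}`. Matsumoto's theorem itself uses the exchange property and the fact that `σ_i σ_j` has
order exactly `m(i, j)`, which is read off from the geometric representation.

For the braid relation between `i` and `j`, rescale so that both pairings equal `-2 cos θ`, where
`θ = π / m`, and put `c k = sin (k θ) / sin θ`. The coefficients of `α_i` and `α_j` in an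
alternating composite of `n` transforms are infima of `c 1 * x t₁ + c 2 * y t₂ + c 3 * x t₃ + ⋯`,
respectively of the same sums with `x` and `y` exchanged, over chains `t ≥ t₁ ≥ t₂ ≥ ⋯ ≥ 0` of
length `n` or `n - 1`, where `x` and `y` are the two coordinates of the path. Indeed the innermost
transform replaces `y` by `y - 2 I` and `x` by `x + 2 cos θ * I`, with `I` the running infimum of
`y`, and `runningInf_reflected` absorbs this into the chain infima by means of
`c (k + 2) = 2 cos θ * c (k + 1) - c k`. Since `c m = 0`, for `n = m` both lengths give the same
infimum, and the order of `i` and `j` disappears.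
-/

section GeometricRepresentation

open Module Polynomial.Chebyshev

theorem chebyshevS_sub_one_eval_mul_sin (θ : ℝ) (n : ℕ) :
    (S ℝ (n - 1)).eval (2 * Real.cos (2 * θ)) * (2 * Real.cos θ) * Real.sin θ =
      Real.sin (2 * n * θ) := by
  have h := S_two_mul_real_cos (2 * θ) (n - 1)
  rw [Real.sin_two_mul] at h
  push_cast at h
  rw [show 2 * (n : ℝ) * θ = (n - 1 + 1) * (2 * θ) by ring, ← h]
  ring

theorem chebyshevS_add_S_sub_one_eval_mul_sin (θ : ℝ) (n : ℕ) :
    ((S ℝ n).eval (2 * Real.cos (2 * θ)) + (S ℝ (n - 1)).eval (2 * Real.cos (2 * θ))) *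
      Real.sin θ = Real.sin ((2 * n + 1) * θ) := by
  induction n using Nat.twoStepInduction with
  | zero => simp
  | one =>
    have h : Real.sin (3 * θ) = 3 * Real.sin θ - 4 * Real.sin θ ^ 3 := Real.sin_three_mul θ
    norm_num [Real.cos_two_mul, h, Real.cos_sq']
    ring
  | more n ih₀ ih₁ =>
    have hsum : Real.sin ((2 * (n + 2 : ℕ) + 1) * θ) + Real.sin ((2 * n + 1) * θ) =
        2 * Real.cos (2 * θ) * Real.sin ((2 * (n + 1 : ℕ) + 1) * θ) := by
      push_cast
      rw [show (2 * ((n : ℝ) + 2) + 1) * θ = (2 * (n + 1) + 1) * θ + 2 * θ by ring,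
        show (2 * (n : ℝ) + 1) * θ = (2 * (n + 1) + 1) * θ - 2 * θ by ring,
        Real.sin_add, Real.sin_sub]
      ring
    rw [eq_sub_of_add_eq hsum, ← ih₀, ← ih₁]
    push_cast
    rw [show (n : ℤ) + 2 - 1 = n - 1 + 2 by ring, S_add_two, S_add_two]
    simp only [Polynomial.eval_sub, Polynomial.eval_mul, Polynomial.eval_X, sub_add_cancel,
      add_sub_cancel_right]
    ring

variable {E : Type*} [AddCommGroup E] [Module ℝ E] {x y : E} {f g : Dual ℝ E}
  (hf : f x = 2) (hg : g y = 2) {θ : ℝ}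

theorem mul_sub_two_eq_two_mul_cos_two_mul {a b : ℝ} (ha : a = -2 * Real.cos θ)
    (hb : b = -2 * Real.cos θ) : 2 * Real.cos (2 * θ) = a * b - 2 := by
  rw [ha, hb, Real.cos_two_mul]
  ring

theorem reflection_mul_reflection_pow_apply_self_eq_self (hsin : Real.sin θ ≠ 0)
    (hfy : f y = -2 * Real.cos θ) (hgx : g x = -2 * Real.cos θ) {m : ℕ} (hm : m * θ = Real.pi) :
    ((reflection hf * reflection hg) ^ m) x = x := by
  rw [reflection_mul_reflection_pow_apply_self hf hg m _
    (mul_sub_two_eq_two_mul_cos_two_mul hfy hgx)]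
  have hx := chebyshevS_add_S_sub_one_eval_mul_sin θ m
  have hy := chebyshevS_sub_one_eval_mul_sin θ m
  rw [show (2 * m + 1) * θ = θ + 2 * Real.pi by rw [← hm]; ring, Real.sin_add_two_pi] at hx
  rw [mul_assoc 2, hm, Real.sin_two_pi] at hy
  rw [mul_eq_right₀ hsin |>.1 hx, hgx, neg_mul, neg_neg,
    (mul_eq_zero.1 hy).resolve_right hsin, one_smul, zero_smul, add_zero]

theorem reflection_mul_reflection_pow_eq_one (hsin : Real.sin θ ≠ 0)
    (hfy : f y = -2 * Real.cos θ) (hgx : g x = -2 * Real.cos θ) {m : ℕ} (hm : m * θ = Real.pi) :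
    (reflection hf * reflection hg) ^ m = 1 := by
  have hx := reflection_mul_reflection_pow_apply_self_eq_self hf hg hsin hfy hgx hm
  have hy : ((reflection hf * reflection hg) ^ m) y = y := by
    have h := reflection_mul_reflection_pow_apply_self_eq_self hg hf hsin hgx hfy hm
    rw [show reflection hg * reflection hf = (reflection hf * reflection hg)⁻¹ by simp,
      inv_pow] at h
    exact ((LinearEquiv.symm_apply_eq _).1 h).symm
  have hker : ∀ z, f z = 0 → g z = 0 → ((reflection hf * reflection hg) ^ m) z = z := by
    intro z hfz hgz
    rw [reflection_mul_reflection_pow_apply hf hg m z]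
    simp [hfz, hgz]
  ext z
  -- The matrix of `(f, g)` on `(x, y)` has determinant `4 * sin θ ^ 2 ≠ 0`.
  obtain ⟨a, b, ha, hb⟩ : ∃ a b : ℝ, f (z - a • x - b • y) = 0 ∧ g (z - a • x - b • y) = 0 := by
    have hcos := Real.cos_sq' θ
    refine ⟨(f z + g z * Real.cos θ) / (2 * Real.sin θ ^ 2),
      (g z + f z * Real.cos θ) / (2 * Real.sin θ ^ 2), ?_, ?_⟩
    · simp only [map_sub, map_smul, smul_eq_mul, hf, hfy]
      field_simp
      linear_combination f z * hcos
    · simp only [map_sub, map_smul, smul_eq_mul, hg, hgx]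
      field_simp
      linear_combination g z * hcos
  have hz : z = (z - a • x - b • y) + (a • x + b • y) := by abel
  rw [hz, map_add, hker _ ha hb, map_add, map_smul, map_smul, hx, hy, LinearEquiv.coe_one, id]

theorem chebyshevS_eval_of_reflection_mul_reflection_pow_eq_one
    (hxy : LinearIndependent ℝ ![x, y]) {p : ℕ}
    (hp : (reflection hf * reflection hg) ^ p = 1) {t : ℝ} (ht : t = f y * g x - 2) :
    (S ℝ p).eval t + (S ℝ (p - 1)).eval t = 1 ∧ (S ℝ (p - 1)).eval t * g x = 0 := by
  have hx := reflection_mul_reflection_pow_apply_self hf hg p t ht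
  rw [hp, LinearEquiv.coe_one, id, mul_neg] at hx
  have hx₀ : (1 : ℝ) • x + (0 : ℝ) • y = x := by rw [one_smul, zero_smul, add_zero]
  obtain ⟨h₁, h₂⟩ := hxy.eq_of_pair (hx₀.trans hx)
  exact ⟨h₁.symm, zero_eq_neg.1 h₂⟩

theorem cos_eq_one_of_reflection_mul_reflection_pow_eq_one (hsin : Real.sin θ ≠ 0)
    (hfy : f y = -2 * Real.cos θ) (hgx : g x = -2 * Real.cos θ)
    (hxy : LinearIndependent ℝ ![x, y]) {p : ℕ}
    (hp : (reflection hf * reflection hg) ^ p = 1) : Real.cos (2 * p * θ) = 1 := by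
  obtain ⟨h₁, h₂⟩ := chebyshevS_eval_of_reflection_mul_reflection_pow_eq_one hf hg hxy hp
    (mul_sub_two_eq_two_mul_cos_two_mul hfy hgx)
  have hsin₁ := chebyshevS_add_S_sub_one_eval_mul_sin θ p
  have hsin₂ := chebyshevS_sub_one_eval_mul_sin θ p
  rw [hgx, neg_mul, mul_neg, neg_eq_zero] at h₂
  rw [h₂, zero_mul] at hsin₂
  rw [h₁, one_mul, add_one_mul, Real.sin_add, ← hsin₂, zero_mul, zero_add] at hsin₁
  exact (mul_eq_right₀ hsin).1 hsin₁.symm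

theorem eq_zero_of_reflection_mul_reflection_pow_eq_one (hfy : f y = -2) (hgx : g x = -2)
    (hxy : LinearIndependent ℝ ![x, y]) {p : ℕ}
    (hp : (reflection hf * reflection hg) ^ p = 1) : p = 0 := by
  have h := (chebyshevS_eval_of_reflection_mul_reflection_pow_eq_one hf hg hxy hp
    (t := 2) (by rw [hfy, hgx]; norm_num)).2
  simpa [S_eval_two, hgx] using h

variable {B : Type*} (M : CoxeterMatrix B)

/-- The simple coroots `2 B(e i, ·)` of the geometric representation on the free vector space with
basis `e i = Finsupp.single i 1`, where `B(e i, e j) = -cos (π / M i j)`. For `M i j = 0`, which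
encodes `m(i, j) = ∞`, the convention `π / 0 = 0` gives the correct value `B(e i, e j) = -1`. -/
noncomputable def geometricCoroot (i : B) : Dual ℝ (B →₀ ℝ) :=
  Finsupp.linearCombination ℝ fun j => -2 * Real.cos (Real.pi / M i j)

theorem geometricCoroot_single (i j : B) :
    geometricCoroot M i (Finsupp.single j 1) = -2 * Real.cos (Real.pi / M i j) := by
  simp [geometricCoroot]

theorem geometricCoroot_single_self (i : B) :
    geometricCoroot M i (Finsupp.single i 1) = 2 := by
  simp [geometricCoroot_single]

/-- The simple reflections of the geometric representation. -/
noncomputable def geometricReflection (i : B) : (B →₀ ℝ) ≃ₗ[ℝ] (B →₀ ℝ) :=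
  reflection (geometricCoroot_single_self M i)

theorem sin_pi_div_pos {m : ℕ} (hm : 2 ≤ m) : 0 < Real.sin (Real.pi / m) := by
  have hm' : (1 : ℝ) < m := by exact_mod_cast hm
  exact Real.sin_pos_of_pos_of_lt_pi (by positivity) (div_lt_self Real.pi_pos hm')

theorem isLiftable_geometricReflection : M.IsLiftable (geometricReflection M) := by
  intro i j
  obtain rfl | hij := eq_or_ne i j
  · rw [M.diagonal, pow_one]
    ext1 z
    exact involutive_reflection (geometricCoroot_single_self M i) z
  obtain hM | hM := Nat.eq_zero_or_pos (M i j)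
  · rw [hM, pow_zero]
  have hM₂ : 2 ≤ M i j := by have := M.off_diagonal i j hij; lia
  exact reflection_mul_reflection_pow_eq_one (geometricCoroot_single_self M i)
    (geometricCoroot_single_self M j) (sin_pi_div_pos hM₂).ne'
    (geometricCoroot_single M i j) (by rw [geometricCoroot_single, M.symmetric])
    (mul_div_cancel₀ _ (by positivity))

theorem dvd_of_geometricReflection_mul_pow_eq_one {i j : B} {p : ℕ}
    (hp : (geometricReflection M i * geometricReflection M j) ^ p = 1) : M i j ∣ p := by
  obtain rfl | hij := eq_or_ne i j
  · simp
  have hind : LinearIndependent ℝ ![Finsupp.single i (1 : ℝ), Finsupp.single j 1] := by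
    have h := (Finsupp.linearIndependent_single_one ℝ B).comp ![i, j] (by simpa using hij)
    convert h using 1
    ext k : 1
    fin_cases k <;> rfl
  have hji := geometricCoroot_single M j i
  rw [M.symmetric] at hji
  obtain hM | hM := Nat.eq_zero_or_pos (M i j)
  · rw [eq_zero_of_reflection_mul_reflection_pow_eq_one _ _
      (by simp [geometricCoroot_single, hM]) (by simp [hji, hM]) hind hp]
    exact dvd_zero _
  have hM₂ : 2 ≤ M i j := by have := M.off_diagonal i j hij; lia
  obtain ⟨n, hn⟩ := (Real.cos_eq_one_iff _).1 <|
    cos_eq_one_of_reflection_mul_reflection_pow_eq_one _ _ (sin_pi_div_pos hM₂).ne'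
      (geometricCoroot_single M i j) hji hind hp
  have hpn : (p : ℝ) = M i j * n := by
    field_simp at hn
    linarith
  exact Int.natCast_dvd_natCast.1 ⟨n, by exact_mod_cast hpn⟩

theorem orderOf_simple_mul_simple {W : Type*} [Group W] (cs : CoxeterSystem M W) (i j : B) :
    orderOf (cs.simple i * cs.simple j) = M i j := by
  refine Nat.dvd_antisymm (orderOf_dvd_of_pow_eq_one (cs.simple_mul_simple_pow i j)) ?_
  refine dvd_of_geometricReflection_mul_pow_eq_one M ?_
  have h := congrArg (cs.lift ⟨_, isLiftable_geometricReflection M⟩)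
    (pow_orderOf_eq_one (cs.simple i * cs.simple j))
  simpa only [map_pow, map_mul, cs.lift_apply_simple, map_one] using h

end GeometricRepresentation

section ExchangeProperty

open CoxeterSystem

theorem prod_map_alternatingWord_two_mul {B G : Type*} [Monoid G] (f : B → G) (i j : B) (m : ℕ) :
    ((alternatingWord i j (2 * m)).map f).prod = (f i * f j) ^ m := by
  induction m with
  | zero => simp [alternatingWord]
  | succ m ih =>
    rw [mul_add_one, alternatingWord_succ, alternatingWord_succ]
    simp only [List.concat_eq_append, List.map_append, List.map_singleton, List.prod_append,
      List.prod_singleton, ih, mul_assoc, pow_succ]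

variable {B W : Type*} [Group W] {M : CoxeterMatrix B} (cs : CoxeterSystem M W)

theorem rightInvSeq_alternatingWord (i j : B) (n : ℕ) :
    cs.rightInvSeq (alternatingWord i j n) =
      ((List.range n).map fun k => (cs.simple j * cs.simple i) ^ k * cs.simple j).reverse := by
  induction n generalizing i j with
  | zero => rfl
  | succ n ih =>
    rw [alternatingWord_succ, cs.rightInvSeq_concat, ih, List.range_succ_eq_map, List.map_cons,
      List.reverse_cons, List.concat_eq_append, pow_zero, one_mul, List.map_reverse, List.map_map,
      List.map_map]
    congr 3
    funext k
    have hconj : ∀ k, cs.simple j * (cs.simple i * cs.simple j) ^ k =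
        (cs.simple j * cs.simple i) ^ k * cs.simple j := fun k =>
      (SemiconjBy.pow_right (by simp [SemiconjBy, mul_assoc]) k : SemiconjBy _ _ _)
    simp only [Function.comp_apply, MulAut.conj_apply, cs.inv_simple, pow_succ, ← mul_assoc, hconj]

theorem exists_isReduced_cons_of_isLeftDescent {w : W} {i : B} (hi : cs.IsLeftDescent w i) :
    ∃ ω, cs.IsReduced (i :: ω) ∧ cs.wordProd (i :: ω) = w := by
  obtain ⟨ω, hω, hprod⟩ := cs.exists_isReduced (cs.simple i * w)
  have hcons : cs.wordProd (i :: ω) = w := by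
    rw [cs.wordProd_cons, ← hprod, cs.simple_mul_simple_cancel_left]
  refine ⟨ω, ?_, hcons⟩
  rw [CoxeterSystem.IsReduced, hcons, ← cs.isLeftDescent_iff.1 hi, hprod, hω.eq, List.length_cons]

theorem exists_isReduced_concat_of_isRightDescent {w : W} {i : B} (hi : cs.IsRightDescent w i) :
    ∃ ω : List B, cs.IsReduced (ω.concat i) ∧ cs.wordProd (ω.concat i) = w := by
  obtain ⟨ω, hω, hprod⟩ := cs.exists_isReduced (w * cs.simple i)
  have hconcat : cs.wordProd (ω.concat i) = w := by
    rw [cs.wordProd_concat, ← hprod, cs.simple_mul_simple_cancel_right]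
  refine ⟨ω, ?_, hconcat⟩
  rw [CoxeterSystem.IsReduced, hconcat, ← cs.isRightDescent_iff.1 hi, hprod, hω.eq,
    List.length_concat]

open scoped Classical in
/-- The action of a simple generator on pairs of a group element and a sign, conjugating the former
and changing the latter exactly when the former is that generator. It is written additively on
signs, and extends to an action of `W` under which a word `ω` changes the sign of `t` as many times
as `t` occurs in its right inversion sequence. -/
noncomputable def signedConj (i : B) : Function.End (W × ZMod 2) := fun p =>
  (cs.simple i * p.1 * cs.simple i, p.2 + if p.1 = cs.simple i then 1 else 0)

open scoped Classical in
theorem prod_map_signedConj (ω : List B) (t : W) (e : ZMod 2) :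
    (ω.map (signedConj cs)).prod (t, e) =
      (cs.wordProd ω * t * (cs.wordProd ω)⁻¹, e + (cs.rightInvSeq ω).count t) := by
  induction ω with
  | nil =>
    change (t, e) = _
    simp
  | cons i ω ih =>
    have hconj : cs.wordProd ω * t * (cs.wordProd ω)⁻¹ = cs.simple i ↔
        (cs.wordProd ω)⁻¹ * cs.simple i * cs.wordProd ω = t := by
      rw [mul_inv_eq_iff_eq_mul, mul_assoc, inv_mul_eq_iff_eq_mul, eq_comm]
    change signedConj cs i ((ω.map (signedConj cs)).prod (t, e)) = _
    rw [ih, signedConj, cs.wordProd_cons, CoxeterSystem.rightInvSeq, List.count_cons]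
    simp only [hconj, beq_iff_eq]
    simp only [mul_inv_rev, cs.inv_simple, mul_assoc, Nat.cast_add,
      Nat.cast_ite, Nat.cast_one, Nat.cast_zero, add_assoc]

open scoped Classical in
theorem count_rightInvSeq_alternatingWord_two_mul (i j : B) (t : W) :
    (cs.rightInvSeq (alternatingWord i j (2 * M i j))).count t =
      2 * (cs.rightInvSeq (alternatingWord i j (M i j))).count t := by
  have hperiod : ∀ k, (cs.simple j * cs.simple i) ^ (M i j + k) * cs.simple j =
      (cs.simple j * cs.simple i) ^ k * cs.simple j := fun k => by
    rw [pow_add, cs.simple_mul_simple_pow', one_mul]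
  rw [rightInvSeq_alternatingWord, rightInvSeq_alternatingWord, List.count_reverse,
    List.count_reverse, two_mul, List.range_add, List.map_append, List.map_map, List.count_append,
    two_mul]
  simp only [Function.comp_def, hperiod]

theorem isLiftable_signedConj : M.IsLiftable (signedConj cs) := by
  classical
  intro i j
  rw [← prod_map_alternatingWord_two_mul]
  funext ⟨t, e⟩
  have hword : cs.wordProd (alternatingWord i j (2 * M i j)) = 1 := by
    rw [CoxeterSystem.wordProd, prod_map_alternatingWord_two_mul, cs.simple_mul_simple_pow]
  have heven : ((2 : ℕ) : ZMod 2) = 0 := rfl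
  rw [prod_map_signedConj, hword, count_rightInvSeq_alternatingWord_two_mul, Nat.cast_mul, heven,
    zero_mul, add_zero, one_mul, inv_one, mul_one, Function.End.one_def, id]

open scoped Classical in
theorem count_rightInvSeq_congr {ω ω' : List B} (h : cs.wordProd ω = cs.wordProd ω') (t : W) :
    ((cs.rightInvSeq ω).count t : ZMod 2) = (cs.rightInvSeq ω').count t := by
  have hlift : ∀ ω, cs.lift ⟨_, isLiftable_signedConj cs⟩ (cs.wordProd ω) =
      (ω.map (signedConj cs)).prod := fun ω => by
    simp only [CoxeterSystem.wordProd, map_list_prod, List.map_map, Function.comp_def,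
      cs.lift_apply_simple]
  have hprod : (ω.map (signedConj cs)).prod (t, 0) = (ω'.map (signedConj cs)).prod (t, 0) := by
    rw [← hlift, ← hlift, h]
  simpa [prod_map_signedConj] using congrArg Prod.snd hprod

theorem simple_mem_rightInvSeq {ω : List B} {i : B} (hi : cs.IsRightDescent (cs.wordProd ω) i) :
    cs.simple i ∈ cs.rightInvSeq ω := by
  classical
  obtain ⟨ω', hred, hconcat⟩ := exists_isReduced_concat_of_isRightDescent cs hi
  have hlast : cs.simple i ∈ cs.rightInvSeq (ω'.concat i) := by
    rw [cs.rightInvSeq_concat, List.concat_eq_append]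
    exact List.mem_append_right _ (List.mem_singleton_self _)
  have hcount := List.count_eq_one_of_mem hred.nodup_rightInvSeq hlast
  have hodd := count_rightInvSeq_congr cs hconcat (cs.simple i)
  rw [hcount, Nat.cast_one] at hodd
  by_contra hmem
  simp [List.count_eq_zero_of_not_mem hmem] at hodd

end ExchangeProperty

section Matsumoto

open CoxeterSystem

variable {B W : Type*} [Group W] {M : CoxeterMatrix B} (cs : CoxeterSystem M W)

theorem simple_notMem_rightInvSeq_alternatingWord {i j : B} {k : ℕ}
    (hk : M i j = 0 ∨ k < M i j) : cs.simple i ∉ cs.rightInvSeq (alternatingWord i j k) := by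
  rw [rightInvSeq_alternatingWord, List.mem_reverse, List.mem_map]
  rintro ⟨q, hq, heq⟩
  have hpow : (cs.simple j * cs.simple i) ^ (q + 1) = 1 := by
    rw [pow_succ, ← mul_assoc, heq, cs.simple_mul_simple_self]
  have hdvd := orderOf_dvd_of_pow_eq_one hpow
  rw [orderOf_simple_mul_simple, M.symmetric] at hdvd
  have hle := Nat.le_of_dvd q.succ_pos hdvd
  have hpos := Nat.pos_of_dvd_of_pos hdvd q.succ_pos
  have := List.mem_range.1 hq
  lia

theorem exists_isReduced_append_alternatingWord_succ {w : W} {i j : B} {k : ℕ}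
    (hi : cs.IsRightDescent w i) (hk : M i j = 0 ∨ k < M i j) {r : List B}
    (hr : cs.IsReduced (r ++ alternatingWord i j k))
    (hw : cs.wordProd (r ++ alternatingWord i j k) = w) :
    ∃ r', cs.IsReduced (r' ++ alternatingWord j i (k + 1)) ∧
      cs.wordProd (r' ++ alternatingWord j i (k + 1)) = w := by
  subst hw
  obtain ⟨p, hp, hget⟩ := List.getElem_of_mem (simple_mem_rightInvSeq cs hi)
  have hpr : p < r.length := by
    by_contra! hle
    refine simple_notMem_rightInvSeq_alternatingWord cs hk ?_
    rw [← List.drop_left (l₁ := r) (l₂ := alternatingWord i j k), cs.rightInvSeq_drop, ← hget]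
    exact List.mem_drop_iff_getElem.2 ⟨p - r.length, by lia, by simp [hle]⟩
  have herase := cs.wordProd_mul_getD_rightInvSeq (r ++ alternatingWord i j k) p
  rw [List.getD_eq_getElem _ _ hp, hget, List.eraseIdx_append_of_lt_length hpr] at herase
  have hprod : cs.wordProd (r.eraseIdx p ++ alternatingWord j i (k + 1)) =
      cs.wordProd (r ++ alternatingWord i j k) := by
    rw [alternatingWord_succ, List.concat_eq_append, ← List.append_assoc, cs.wordProd_append,
      ← herase, cs.wordProd_singleton, cs.simple_mul_simple_cancel_right]
  refine ⟨r.eraseIdx p, ?_, hprod⟩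
  rw [CoxeterSystem.IsReduced, hprod, hr.eq, List.length_append, List.length_append,
    List.length_eraseIdx_of_lt hpr, length_alternatingWord, length_alternatingWord]
  lia

theorem exists_isReduced_append_alternatingWord {w : W} {i j : B} (hi : cs.IsRightDescent w i)
    (hj : cs.IsRightDescent w j) {k : ℕ} (hk : M i j = 0 ∨ k ≤ M i j) :
    ∃ r, cs.IsReduced (r ++ alternatingWord i j k) ∧
      cs.wordProd (r ++ alternatingWord i j k) = w := by
  induction k generalizing i j with
  | zero =>
    obtain ⟨r, hr, hw⟩ := cs.exists_isReduced w
    exact ⟨r, by simpa [alternatingWord] using hr, by simpa [alternatingWord] using hw.symm⟩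
  | succ k ih =>
    rw [M.symmetric] at hk
    obtain ⟨r, hr, hw⟩ := ih hj hi (by lia)
    exact exists_isReduced_append_alternatingWord_succ cs hj (by lia) hr hw

theorem ne_zero_of_isRightDescent {w : W} {i j : B} (hi : cs.IsRightDescent w i)
    (hj : cs.IsRightDescent w j) : M i j ≠ 0 := by
  intro hM
  obtain ⟨r, hr, hw⟩ := exists_isReduced_append_alternatingWord cs hi hj
    (k := cs.length w + 1) (.inl hM)
  have hlen := hr.eq
  rw [hw, List.length_append, length_alternatingWord] at hlen
  lia

theorem exists_isReduced_append_braidWord {w : W} {i j : B} (hi : cs.IsRightDescent w i)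
    (hj : cs.IsRightDescent w j) :
    ∃ r, cs.IsReduced (r ++ braidWord M i j) ∧ cs.wordProd (r ++ braidWord M i j) = w ∧
      cs.IsReduced (r ++ braidWord M j i) ∧ cs.wordProd (r ++ braidWord M j i) = w := by
  obtain ⟨r, hr, hw⟩ := exists_isReduced_append_alternatingWord cs hi hj (.inr le_rfl)
  have hw' : cs.wordProd (r ++ braidWord M j i) = w := by
    rw [cs.wordProd_append, cs.wordProd_braidWord_eq, ← cs.wordProd_append, hw]
  refine ⟨r, hr, hw, ?_, hw'⟩
  rw [CoxeterSystem.IsReduced, hw', ← hw, hr.eq, List.length_append, List.length_append,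
    length_alternatingWord, length_alternatingWord, M.symmetric]

theorem isRightDescent_of_isReduced_concat {ω : List B} {i : B} (h : cs.IsReduced (ω.concat i)) :
    cs.IsRightDescent (cs.wordProd (ω.concat i)) i := by
  rw [CoxeterSystem.IsRightDescent, h.eq, cs.wordProd_concat, cs.simple_mul_simple_cancel_right,
    List.length_concat]
  exact Nat.lt_succ_of_le (cs.length_wordProd_le ω)

theorem isReduced_of_isReduced_concat {ω : List B} {i : B} (h : cs.IsReduced (ω.concat i)) :
    cs.IsReduced ω := by
  simpa using h.take ω.length

variable {G : Type*} [Monoid G] {f : B → G}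

theorem prod_map_eq_of_forall_concat
    (hf : ∀ i j, M i j ≠ 0 → ((braidWord M i j).map f).prod = ((braidWord M j i).map f).prod)
    {w : W} (hconcat : ∀ (a b : List B) (i : B), cs.IsReduced (a.concat i) →
      cs.IsReduced (b.concat i) → cs.wordProd (a.concat i) = w → cs.wordProd (b.concat i) = w →
      ((a.concat i).map f).prod = ((b.concat i).map f).prod)
    {ω ω' : List B} (hω : cs.IsReduced ω) (hω' : cs.IsReduced ω') (h : cs.wordProd ω = w)
    (h' : cs.wordProd ω' = w) : (ω.map f).prod = (ω'.map f).prod := by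
  have hlen : ω.length = ω'.length := by rw [← hω.eq, ← hω'.eq, h, h']
  obtain rfl | ⟨a, i, rfl⟩ := ω.eq_nil_or_concat
  · rw [List.length_eq_zero_iff.1 hlen.symm]
  obtain rfl | ⟨b, j, rfl⟩ := ω'.eq_nil_or_concat
  · simp at hlen
  have hi : cs.IsRightDescent w i := h ▸ isRightDescent_of_isReduced_concat cs hω
  have hj : cs.IsRightDescent w j := h' ▸ isRightDescent_of_isReduced_concat cs hω'
  have hM := ne_zero_of_isRightDescent cs hi hj
  obtain ⟨r, hr, hw, hr', hw'⟩ := exists_isReduced_append_braidWord cs hi hj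
  have hend : ∀ {i j : B}, M i j ≠ 0 →
      r ++ braidWord M i j = (r ++ alternatingWord j i (M i j - 1)).concat j := fun {i j} hM => by
    rw [braidWord, ← Nat.succ_pred_eq_of_ne_zero hM, alternatingWord_succ]
    simp
  have hM' : M j i ≠ 0 := M.symmetric i j ▸ hM
  calc ((a.concat i).map f).prod = ((r ++ braidWord M j i).map f).prod := by
        rw [hend hM'] at hr' hw' ⊢
        exact hconcat _ _ _ hω hr' h hw'
    _ = ((r ++ braidWord M i j).map f).prod := by
        rw [List.map_append, List.prod_append, hf j i hM', ← List.prod_append, ← List.map_append]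
    _ = ((b.concat j).map f).prod := by
        rw [hend hM] at hr hw ⊢
        exact hconcat _ _ _ hr hω' hw h'

theorem prod_map_eq_of_isReduced
    (hf : ∀ i j, M i j ≠ 0 → ((braidWord M i j).map f).prod = ((braidWord M j i).map f).prod)
    {ω ω' : List B} (hω : cs.IsReduced ω) (hω' : cs.IsReduced ω')
    (h : cs.wordProd ω = cs.wordProd ω') : (ω.map f).prod = (ω'.map f).prod := by
  induction hn : cs.length (cs.wordProd ω) using Nat.strong_induction_on generalizing ω ω' with
  | _ n ih =>
    refine prod_map_eq_of_forall_concat cs hf (fun a b i ha hb hωa hωb => ?_) hω hω' rfl h.symm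
    have ha' := isReduced_of_isReduced_concat cs ha
    have hlt : cs.length (cs.wordProd a) < n := by
      rw [← hn, ← hωa, ha.eq, ha'.eq, List.length_concat]
      exact Nat.lt_succ_self _
    have hab : cs.wordProd a = cs.wordProd b := by
      rw [← hωb, cs.wordProd_concat, cs.wordProd_concat] at hωa
      exact mul_right_cancel hωa
    simp only [List.concat_eq_append, List.map_append, List.prod_append]
    rw [ih _ hlt ha' (isReduced_of_isReduced_concat cs hb) hab rfl]

end Matsumoto

section RunningInf

open Set

/-- The real-valued continuous paths issued from `0`. They are indexed by the whole line, a path on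
`[0, T]` being extended by a constant on both sides. -/
def pathSubmodule : Submodule ℝ (ℝ → ℝ) where
  carrier := {f | Continuous f ∧ f 0 = 0}
  add_mem' hf hg := ⟨hf.1.add hg.1, by simp [hf.2, hg.2]⟩
  zero_mem' := ⟨continuous_const, rfl⟩
  smul_mem' r _ hf := ⟨hf.1.const_smul r, by simp [hf.2]⟩

/-- The running infimum `t ↦ inf_{0 ≤ s ≤ t} f s`. It takes the junk value `0` for `t < 0`. -/
noncomputable def runningInf (f : ℝ → ℝ) (t : ℝ) : ℝ := sInf (f '' Icc 0 t)

theorem runningInf_of_neg (f : ℝ → ℝ) {t : ℝ} (ht : t < 0) : runningInf f t = 0 := by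
  simp [runningInf, Icc_eq_empty (not_le.2 ht)]

theorem runningInf_le {f : ℝ → ℝ} (hf : Continuous f) {s t : ℝ} (hs : s ∈ Icc 0 t) :
    runningInf f t ≤ f s :=
  csInf_le (isCompact_Icc.image hf).bddBelow (mem_image_of_mem f hs)

theorem le_runningInf {f : ℝ → ℝ} {a t : ℝ} (ht : 0 ≤ t) (h : ∀ s ∈ Icc 0 t, a ≤ f s) :
    a ≤ runningInf f t :=
  le_csInf ((nonempty_Icc.2 ht).image f) (forall_mem_image.2 h)

theorem exists_runningInf_eq {f : ℝ → ℝ} (hf : Continuous f) {t : ℝ} (ht : 0 ≤ t) :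
    ∃ s ∈ Icc 0 t, f s = runningInf f t :=
  (isCompact_Icc.image hf).sInf_mem ((nonempty_Icc.2 ht).image f)

theorem antitoneOn_runningInf {f : ℝ → ℝ} (hf : Continuous f) :
    AntitoneOn (runningInf f) (Ici 0) := fun _ hs _ _ hst =>
  le_runningInf hs fun _ hu => runningInf_le hf ⟨hu.1, hu.2.trans hst⟩

theorem runningInf_eq_sInf_unitInterval {f : ℝ → ℝ} (h0 : f 0 = 0) (t : ℝ) :
    runningInf f t = sInf ((fun u => f (max t 0 * u)) '' Icc (0 : ℝ) 1) := by
  obtain ht | ht := lt_or_ge t 0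
  · simp [runningInf_of_neg f ht, max_eq_right ht.le, h0]
  · rw [max_eq_left ht, runningInf, ← image_image f (t * ·), image_mul_left_Icc ht zero_le_one,
      mul_zero, mul_one]

theorem runningInf_mem_pathSubmodule {f : ℝ → ℝ} (hf : f ∈ pathSubmodule) :
    runningInf f ∈ pathSubmodule := by
  have hcont := hf.1
  refine ⟨?_, by simp [runningInf, hf.2]⟩
  simp only [funext (runningInf_eq_sInf_unitInterval hf.2)]
  exact isCompact_Icc.continuous_sInf (by fun_prop)

theorem runningInf_smul (f : ℝ → ℝ) {q : ℝ} (hq : 0 ≤ q) :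
    runningInf (q • f) = q • runningInf f := by
  funext t
  rw [runningInf, Pi.smul_apply, runningInf, ← Real.sInf_smul_of_nonneg hq, ← image_smul,
    image_image]
  rfl

theorem exists_first_passage {f : ℝ → ℝ} (hf : Continuous f) {u s c : ℝ} (hus : u ≤ s)
    (hu : c ≤ f u) (hs : f s ≤ c) : ∃ r ∈ Icc u s, f r = c ∧ ∀ v ∈ Icc u r, c ≤ f v := by
  obtain ⟨v, hv⟩ := intermediate_value_Icc' hus hf.continuousOn ⟨hs, hu⟩
  obtain ⟨r, ⟨hr, hrc⟩, hleast⟩ :=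
    (isCompact_Icc.inter_right (isClosed_singleton.preimage hf)).exists_isLeast ⟨v, hv⟩
  refine ⟨r, hr, hrc, fun v hv => ?_⟩
  by_contra! hlt
  obtain ⟨v', hv', hfv'⟩ := intermediate_value_Icc' hv.1 hf.continuousOn ⟨hlt.le, hu⟩
  have hrv' := hleast ⟨⟨hv'.1, hv'.2.trans (hv.2.trans hr.2)⟩, hfv'⟩
  rw [le_antisymm hv.2 (hrv'.trans hv'.2), hrc] at hlt
  exact hlt.false

/-- The witness is the first passage of `z` at the level `runningInf z u` after `u`, or `s` itself
if this level is not crossed. -/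
theorem exists_reflected_le {z : ℝ → ℝ} (hz : Continuous z) {u s t : ℝ} (hu : 0 ≤ u) (hus : u ≤ s)
    (hst : s ≤ t) :
    ∃ r ∈ Icc u s, z r - 2 * runningInf z r + runningInf z u + runningInf z t ≤ z s := by
  have hs := hu.trans hus
  have hts := antitoneOn_runningInf hz hs (hs.trans hst) hst
  have hsz := runningInf_le hz ⟨hs, hst⟩
  obtain hle | hlt := le_or_gt (runningInf z u) (runningInf z s)
  · exact ⟨s, ⟨hus, le_rfl⟩, by linarith⟩
  have hzu := runningInf_le hz ⟨hu, le_rfl⟩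
  obtain ⟨v, hv, hzv⟩ := exists_runningInf_eq hz hs
  have huv : u ≤ v := by
    by_contra! hvu
    linarith [runningInf_le hz ⟨hv.1, hvu.le⟩]
  obtain ⟨r, hr, hzr, hmin⟩ := exists_first_passage hz huv hzu (hzv.trans_lt hlt).le
  have hzr' : runningInf z u ≤ runningInf z r := le_runningInf (hu.trans hr.1) fun v hv => by
    obtain hvu | huv := le_total v u
    · exact runningInf_le hz ⟨hv.1, hvu⟩
    · exact hmin v ⟨huv, hv.2⟩
  exact ⟨r, ⟨hr.1, hr.2.trans hv.2⟩, by linarith⟩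

theorem exists_le_reflected {z : ℝ → ℝ} (hz : Continuous z) {u s t : ℝ} (hu : 0 ≤ u) (hus : u ≤ s)
    (hst : s ≤ t) :
    ∃ r ∈ Icc u t, z r ≤ z s - 2 * runningInf z s + runningInf z u + runningInf z t := by
  have hs := hu.trans hus
  have hsu := antitoneOn_runningInf hz hu hs hus
  obtain hle | hlt := le_or_gt (runningInf z s) (runningInf z t)
  · exact ⟨s, ⟨hus, hst⟩, by linarith⟩
  obtain ⟨r, hr, hzr⟩ := exists_runningInf_eq hz (hs.trans hst)
  have hsr : s ≤ r := by
    by_contra! hrs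
    linarith [runningInf_le hz ⟨hr.1, hrs.le⟩]
  exact ⟨r, ⟨hus.trans hsr, hr.2⟩, by linarith [runningInf_le hz ⟨hs, le_rfl⟩]⟩

theorem runningInf_reflected {z R : ℝ → ℝ} (hz : z ∈ pathSubmodule) (hR : R ∈ pathSubmodule)
    {q : ℝ} (hq : 0 ≤ q) :
    runningInf (q • (z - (2 : ℝ) • runningInf z) + runningInf (R + q • runningInf z)) +
      q • runningInf z = runningInf (q • z + runningInf R) := by
  have hIz := runningInf_mem_pathSubmodule hz
  have hRz := add_mem hR (pathSubmodule.smul_mem q hIz)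
  have hL : Continuous (q • (z - (2 : ℝ) • runningInf z) + runningInf (R + q • runningInf z)) :=
    (add_mem (pathSubmodule.smul_mem q (sub_mem hz (pathSubmodule.smul_mem 2 hIz)))
      (runningInf_mem_pathSubmodule hRz)).1
  have hL' : Continuous (q • z + runningInf R) :=
    (add_mem (pathSubmodule.smul_mem q hz) (runningInf_mem_pathSubmodule hR)).1
  funext t
  obtain ht | ht := lt_or_ge t 0
  · simp [runningInf_of_neg _ ht]
  rw [Pi.add_apply, Pi.smul_apply, smul_eq_mul]
  apply le_antisymm
  · refine le_runningInf ht fun s hs => ?_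
    obtain ⟨u, hu, hRu⟩ := exists_runningInf_eq hR.1 hs.1
    obtain ⟨r, hr, hle⟩ := exists_reflected_le hz.1 hu.1 hu.2 hs.2
    have hLr := runningInf_le hL ⟨hu.1.trans hr.1, hr.2.trans hs.2⟩
    have hRzu := runningInf_le hRz.1 ⟨hu.1, hr.1⟩
    have hmul := mul_le_mul_of_nonneg_left hle hq
    simp only [Pi.add_apply, Pi.sub_apply, Pi.smul_apply, smul_eq_mul] at hLr hRzu ⊢
    linarith
  · rw [← sub_le_iff_le_add]
    refine le_runningInf ht fun s hs => ?_
    obtain ⟨u, hu, hRu⟩ := exists_runningInf_eq hRz.1 hs.1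
    obtain ⟨r, hr, hle⟩ := exists_le_reflected hz.1 hu.1 hu.2 hs.2
    have hLr := runningInf_le hL' ⟨hu.1.trans hr.1, hr.2⟩
    have hRu' := runningInf_le hR.1 ⟨hu.1, hr.1⟩
    have hmul := mul_le_mul_of_nonneg_left hle hq
    simp only [Pi.add_apply, Pi.sub_apply, Pi.smul_apply, smul_eq_mul] at hRu hLr ⊢
    linarith

/-- `chainInf c n k x y t` is the infimum of `c k * x t₁ + c (k + 1) * y t₂ + c (k + 2) * x t₃ + ⋯`
(`n` terms) over the chains `t ≥ t₁ ≥ t₂ ≥ ⋯ ≥ tₙ ≥ 0`. -/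
noncomputable def chainInf (c : ℕ → ℝ) : ℕ → ℕ → (ℝ → ℝ) → (ℝ → ℝ) → ℝ → ℝ
  | 0, _, _, _ => 0
  | n + 1, k, x, y => runningInf (c k • x + chainInf c n (k + 1) y x)

variable {c : ℕ → ℝ} {x y : ℝ → ℝ}

theorem chainInf_mem_pathSubmodule (hx : x ∈ pathSubmodule) (hy : y ∈ pathSubmodule) (n k : ℕ) :
    chainInf c n k x y ∈ pathSubmodule := by
  induction n generalizing k x y with
  | zero => exact zero_mem _
  | succ n ih =>
    exact runningInf_mem_pathSubmodule (add_mem (pathSubmodule.smul_mem _ hx) (ih hy hx _))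

theorem chainInf_succ_of_eq_zero {n k : ℕ} (h : c (k + n) = 0) :
    chainInf c (n + 1) k x y = chainInf c n k x y := by
  induction n generalizing k x y with
  | zero =>
    rw [add_zero] at h
    simpa [chainInf, h] using runningInf_smul (0 : ℝ → ℝ) le_rfl
  | succ n ih =>
    rw [chainInf, ih (by rwa [add_right_comm]), chainInf]

theorem chainInf_reflected_of_chainInf_reflected {A : ℝ} {k n : ℕ}
    (hrec : c (k + 2) = A * c (k + 1) - c k)
    (h : chainInf c n (k + 2) (x - (2 : ℝ) • runningInf x) (y + A • runningInf x) +
      c (k + 2) • runningInf x = chainInf c (n + 1) (k + 2) x y) :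
    chainInf c (n + 1) (k + 1) (y + A • runningInf x) (x - (2 : ℝ) • runningInf x) =
      runningInf (c (k + 1) • y + chainInf c (n + 1) (k + 2) x y + c k • runningInf x) := by
  rw [chainInf, ← h, hrec]
  congr 1
  module

theorem chainInf_two_mul_reflected (hx : x ∈ pathSubmodule) (hy : y ∈ pathSubmodule) {A : ℝ}
    (hrec : ∀ k, c (k + 2) = A * c (k + 1) - c k) (p k : ℕ)
    (hc : ∀ i ∈ Icc k (k + 2 * p), 0 ≤ c i) :
    chainInf c (2 * p) k (x - (2 : ℝ) • runningInf x) (y + A • runningInf x) + c k • runningInf x =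
      chainInf c (2 * p + 1) k x y := by
  induction p generalizing k with
  | zero =>
    simp [chainInf, runningInf_smul x (hc k (by simp))]
  | succ p ih =>
    have hodd := chainInf_reflected_of_chainInf_reflected (hrec k)
      (ih (k + 2) fun i hi => hc i ⟨by grind, by grind⟩)
    have hR := add_mem (pathSubmodule.smul_mem (c (k + 1)) hy)
      (chainInf_mem_pathSubmodule (c := c) hx hy (2 * p + 1) (k + 2))
    rw [mul_add_one, chainInf, hodd, runningInf_reflected hx hR (hc k (by simp))]
    rfl

theorem chainInf_two_mul_add_one_reflected (hx : x ∈ pathSubmodule) (hy : y ∈ pathSubmodule) {A : ℝ}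
    (hrec : ∀ k, c (k + 2) = A * c (k + 1) - c k) (h0 : c 0 = 0) (p : ℕ)
    (hc : ∀ i ≤ 2 * p + 2, 0 ≤ c i) :
    chainInf c (2 * p + 1) 1 (y + A • runningInf x) (x - (2 : ℝ) • runningInf x) =
      chainInf c (2 * p + 2) 1 y x := by
  rw [chainInf_reflected_of_chainInf_reflected (k := 0) (hrec 0)
    (chainInf_two_mul_reflected hx hy hrec p 2 fun i hi => hc i (by grind)), h0, zero_smul,
    add_zero]
  rfl

end RunningInf

section Pitman

open Module Set CoxeterSystem

variable {V B : Type*} [AddCommGroup V] [Module ℝ V]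

theorem pitman_apply (α : V) (αv : Dual ℝ V) (π : ℝ → V) (t : ℝ) :
    pitman α αv π t = π t - runningInf (αv ∘ π) t • α := rfl

theorem dual_comp_pitman (α : V) (αv β : Dual ℝ V) (π : ℝ → V) :
    β ∘ pitman α αv π = β ∘ π - β α • runningInf (αv ∘ π) := by
  funext t
  simp [pitman_apply, mul_comm]

theorem dual_comp_pitman_mem_pathSubmodule {α : V} {αv β : Dual ℝ V} {π : ℝ → V}
    (hβ : β ∘ π ∈ pathSubmodule) (hαv : αv ∘ π ∈ pathSubmodule) :
    β ∘ pitman α αv π ∈ pathSubmodule := by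
  rw [dual_comp_pitman]
  exact sub_mem hβ (pathSubmodule.smul_mem _ (runningInf_mem_pathSubmodule hαv))

theorem pitman_smul_inv_smul (α : V) (αv : Dual ℝ V) {r : ℝ} (hr : 0 < r) :
    pitman (r • α) (r⁻¹ • αv) = pitman α αv := by
  funext π t
  have hcomp : (r⁻¹ • αv) ∘ π = r⁻¹ • (αv ∘ π) := rfl
  rw [pitman_apply, pitman_apply, hcomp, runningInf_smul _ (inv_nonneg.2 hr.le), Pi.smul_apply,
    smul_eq_mul, smul_smul, mul_right_comm, inv_mul_cancel₀ hr.ne', one_mul]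

theorem dual_pitman_nonneg {α : V} {αv : Dual ℝ V} (hα : αv α = 2) {π : ℝ → V}
    (hπ : αv ∘ π ∈ pathSubmodule) {t : ℝ} (ht : 0 ≤ t) : 0 ≤ αv (pitman α αv π t) := by
  have hdual := congrFun (dual_comp_pitman α αv αv π) t
  simp only [hα, Function.comp_apply, Pi.sub_apply, Pi.smul_apply, smul_eq_mul] at hdual
  have ht' := runningInf_le hπ.1 ⟨ht, le_rfl⟩
  have h0 := runningInf_le hπ.1 ⟨le_rfl, ht⟩
  rw [hπ.2] at h0
  rw [Function.comp_apply] at ht'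
  linarith

theorem pitman_pitman {α : V} {αv : Dual ℝ V} (hα : αv α = 2) {π : ℝ → V}
    (hπ : αv ∘ π ∈ pathSubmodule) : pitman α αv (pitman α αv π) = pitman α αv π := by
  have hmem := dual_comp_pitman_mem_pathSubmodule (α := α) hπ hπ
  funext t
  rw [pitman_apply _ _ (pitman α αv π), sub_eq_self]
  obtain ht | ht := lt_or_ge t 0
  · rw [runningInf_of_neg _ ht, zero_smul]
  have hle := runningInf_le hmem.1 ⟨le_rfl, ht⟩
  rw [hmem.2] at hle
  rw [le_antisymm hle (le_runningInf ht fun s hs => dual_pitman_nonneg hα hπ hs.1), zero_smul]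

theorem pitman_eqOn (α : V) (αv : Dual ℝ V) {π π' : ℝ → V} {T : ℝ} (h : EqOn π π' (Icc 0 T)) :
    EqOn (pitman α αv π) (pitman α αv π') (Icc 0 T) := by
  intro t ht
  have himage : (αv ∘ π) '' Icc 0 t = (αv ∘ π') '' Icc 0 t :=
    image_congr fun s hs => congrArg αv (h ⟨hs.1, hs.2.trans ht.2⟩)
  rw [pitman_apply, pitman_apply, runningInf, runningInf, himage, h ht]

variable (α : B → V) (αv : B → Dual ℝ V)

theorem pitmanWord_cons (s : B) (l : List B) (π : ℝ → V) :
    pitmanWord α αv (s :: l) π = pitman (α s) (αv s) (pitmanWord α αv l π) := rfl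

theorem pitmanWord_concat (l : List B) (s : B) (π : ℝ → V) :
    pitmanWord α αv (l.concat s) π = pitmanWord α αv l (pitman (α s) (αv s) π) := by
  induction l with
  | nil => rfl
  | cons s' l ih => rw [List.concat_cons, pitmanWord_cons, pitmanWord_cons, ih]

theorem pitmanWord_eqOn (l : List B) {π π' : ℝ → V} {T : ℝ} (h : EqOn π π' (Icc 0 T)) :
    EqOn (pitmanWord α αv l π) (pitmanWord α αv l π') (Icc 0 T) := by
  induction l with
  | nil => exact h
  | cons s l ih => exact pitman_eqOn _ _ ih

theorem pitmanWord_smul_inv_smul {r : B → ℝ} (hr : ∀ s, 0 < r s) (l : List B) :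
    pitmanWord (fun s => r s • α s) (fun s => (r s)⁻¹ • αv s) l = pitmanWord α αv l := by
  simp only [pitmanWord, pitman_smul_inv_smul _ _ (hr _)]

variable {α αv}

theorem pitmanWord_alternatingWord {c : ℕ → ℝ} {A : ℝ}
    (hrec : ∀ k, c (k + 2) = A * c (k + 1) - c k) (h0 : c 0 = 0) (h1 : c 1 = 1) {n : ℕ}
    (hc : ∀ k ≤ n, 0 ≤ c k) {i j : B} (hi : αv i (α i) = 2) (hj : αv j (α j) = 2)
    (hij : αv i (α j) = -A) (hji : αv j (α i) = -A) {π : ℝ → V}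
    (hπi : αv i ∘ π ∈ pathSubmodule) (hπj : αv j ∘ π ∈ pathSubmodule) :
    pitmanWord α αv (alternatingWord i j n) π = fun t =>
      π t - chainInf c (n - n % 2) 1 (αv i ∘ π) (αv j ∘ π) t • α i -
        chainInf c (n - (n + 1) % 2) 1 (αv j ∘ π) (αv i ∘ π) t • α j := by
  induction n generalizing i j π with
  | zero => simp [alternatingWord, pitmanWord, chainInf]
  | succ n ih =>
    have hpi : αv i ∘ pitman (α j) (αv j) π = αv i ∘ π + A • runningInf (αv j ∘ π) := by
      rw [dual_comp_pitman, hij, neg_smul, sub_neg_eq_add]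
    have hpj : αv j ∘ pitman (α j) (αv j) π = αv j ∘ π - (2 : ℝ) • runningInf (αv j ∘ π) := by
      rw [dual_comp_pitman, hj]
    rw [alternatingWord_succ, pitmanWord_concat,
      ih (fun k hk => hc k (hk.trans n.le_succ)) hj hi hji hij
        (dual_comp_pitman_mem_pathSubmodule hπj hπj) (dual_comp_pitman_mem_pathSubmodule hπi hπj),
      hpi, hpj]
    have hchain_j := chainInf_two_mul_reflected hπj hπi hrec (n / 2) 1
      fun k hk => hc k (by grind)
    have hchain_i : chainInf c (n - (n + 1) % 2) 1 (αv i ∘ π + A • runningInf (αv j ∘ π))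
          (αv j ∘ π - (2 : ℝ) • runningInf (αv j ∘ π)) =
        chainInf c (n + 1 - (n + 1) % 2) 1 (αv i ∘ π) (αv j ∘ π) := by
      cases n with
      | zero => rfl
      | succ n =>
        have hodd := chainInf_two_mul_add_one_reflected hπj hπi hrec h0 (n / 2)
          fun k hk => hc k (by lia)
        convert hodd using 2 <;> lia
    rw [h1, one_smul, show 2 * (n / 2) = n - n % 2 by lia,
      show n - n % 2 + 1 = n + 1 - (n + 1 + 1) % 2 by lia] at hchain_j
    funext t
    rw [hchain_i, ← hchain_j, pitman_apply, Pi.add_apply]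
    module

theorem pitmanWord_alternatingWord_comm {c : ℕ → ℝ} {A : ℝ}
    (hrec : ∀ k, c (k + 2) = A * c (k + 1) - c k) (h0 : c 0 = 0) (h1 : c 1 = 1) {m : ℕ}
    (hc : ∀ k ≤ m, 0 ≤ c k) (hm : c m = 0) {i j : B} (hi : αv i (α i) = 2) (hj : αv j (α j) = 2)
    (hij : αv i (α j) = -A) (hji : αv j (α i) = -A) {π : ℝ → V}
    (hπi : αv i ∘ π ∈ pathSubmodule) (hπj : αv j ∘ π ∈ pathSubmodule) :
    pitmanWord α αv (alternatingWord i j m) π = pitmanWord α αv (alternatingWord j i m) π := by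
  have hchain : ∀ k < 2, ∀ x y, chainInf c (m - k) 1 x y = chainInf c m 1 x y := by
    intro k hk x y
    obtain rfl | rfl : k = 0 ∨ k = 1 := by lia
    · rfl
    · cases m with
      | zero => rfl
      | succ n => exact (chainInf_succ_of_eq_zero (by rwa [add_comm])).symm
  rw [pitmanWord_alternatingWord hrec h0 h1 hc hi hj hij hji hπi hπj,
    pitmanWord_alternatingWord hrec h0 h1 hc hj hi hji hij hπj hπi]
  funext t
  simp only [hchain _ (Nat.mod_lt _ two_pos), sub_right_comm]

theorem pitmanWord_alternatingWord_comm_of_eq_cos {m : ℕ} (hm : 2 ≤ m) {i j : B}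
    (hi : αv i (α i) = 2) (hj : αv j (α j) = 2)
    (hij : αv i (α j) = -(2 * Real.cos (Real.pi / m)))
    (hji : αv j (α i) = -(2 * Real.cos (Real.pi / m))) {π : ℝ → V}
    (hπi : αv i ∘ π ∈ pathSubmodule) (hπj : αv j ∘ π ∈ pathSubmodule) :
    pitmanWord α αv (alternatingWord i j m) π = pitmanWord α αv (alternatingWord j i m) π := by
  have hsin := sin_pi_div_pos hm
  have hm₀ : (0 : ℝ) < m := by positivity
  refine pitmanWord_alternatingWord_comm
    (c := fun k => Real.sin (k * (Real.pi / m)) / Real.sin (Real.pi / m))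
    (fun k => ?_) (by simp) (by simp [hsin.ne']) (fun k hk => ?_) ?_ hi hj hij hji hπi hπj
  · have h₂ : Real.sin ((k + 2 : ℕ) * (Real.pi / m)) =
        2 * Real.cos (Real.pi / m) * Real.sin ((k + 1 : ℕ) * (Real.pi / m)) -
          Real.sin (k * (Real.pi / m)) := by
      push_cast
      rw [show ((k : ℝ) + 2) * (Real.pi / m) = (k + 1) * (Real.pi / m) + Real.pi / m by ring,
        show (k : ℝ) * (Real.pi / m) = (k + 1) * (Real.pi / m) - Real.pi / m by ring,
        Real.sin_add, Real.sin_sub]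
      ring
    rw [h₂, sub_div, mul_div_assoc]
  · have hk' : (k : ℝ) ≤ m := by exact_mod_cast hk
    refine div_nonneg (Real.sin_nonneg_of_nonneg_of_le_pi (by positivity) ?_) hsin.le
    calc k * (Real.pi / m) ≤ m * (Real.pi / m) := by gcongr
      _ = Real.pi := mul_div_cancel₀ _ hm₀.ne'
  · rw [mul_div_cancel₀ _ hm₀.ne', Real.sin_pi, zero_div]

theorem exists_pos_mul_eq_inv_mul_eq {a b d : ℝ} (hd : 0 ≤ d) (ha : a < 0) (hb : b < 0)
    (hab : a * b = d ^ 2) : ∃ r : ℝ, 0 < r ∧ r * a = -d ∧ r⁻¹ * b = -d := by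
  have hd' : 0 < d := hd.lt_of_ne' fun h => by
    rw [h] at hab
    nlinarith
  refine ⟨d / -a, div_pos hd' (neg_pos.2 ha), ?_, ?_⟩
  · rw [div_mul_eq_mul_div, mul_div_assoc, div_neg, div_self ha.ne, mul_neg_one]
  · field_simp
    linarith

theorem pitmanWord_alternatingWord_comm_of_mul_eq_cos_sq {m : ℕ} (hm : 2 ≤ m) {i j : B}
    (hne : i ≠ j) (hi : αv i (α i) = 2) (hj : αv j (α j) = 2)
    (hij : αv i (α j) < 0) (hji : αv j (α i) < 0)
    (hmul : αv i (α j) * αv j (α i) = 4 * Real.cos (Real.pi / m) ^ 2) {π : ℝ → V}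
    (hπi : αv i ∘ π ∈ pathSubmodule) (hπj : αv j ∘ π ∈ pathSubmodule) :
    pitmanWord α αv (alternatingWord i j m) π = pitmanWord α αv (alternatingWord j i m) π := by
  classical
  have hm' : (2 : ℝ) ≤ m := by exact_mod_cast hm
  have hnonneg : 0 ≤ Real.pi / m := by positivity
  have hle : Real.pi / m ≤ Real.pi / 2 := by gcongr
  have hcos : 0 ≤ Real.cos (Real.pi / m) :=
    Real.cos_nonneg_of_neg_pi_div_two_le_of_le (by linarith [Real.pi_pos, hnonneg]) hle
  obtain ⟨r, hr, hr₁, hr₂⟩ := exists_pos_mul_eq_inv_mul_eq (d := 2 * Real.cos (Real.pi / m))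
    (by positivity) hij hji (by rw [hmul]; ring)
  have hpos : ∀ s, 0 < Function.update (fun _ => (1 : ℝ)) j r s := fun s => by
    obtain rfl | hs := eq_or_ne s j <;> simp [*]
  rw [← pitmanWord_smul_inv_smul α αv hpos, ← pitmanWord_smul_inv_smul α αv hpos]
  refine pitmanWord_alternatingWord_comm_of_eq_cos hm ?_ ?_ ?_ ?_ ?_ ?_
  · simp [hne, hi]
  · simp [hj, hr.ne']
  · simp [hne, hr₁]
  · simp [hne, hr₂]
  · simpa [hne] using hπi
  · rw [Function.update_self]
    exact pathSubmodule.smul_mem r⁻¹ hπj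

variable (αv) in
/-- The paths in `V` whose images under all the coroots are continuous and start from `0`. -/
def dualPaths : Set (ℝ → V) := {π | ∀ s, αv s ∘ π ∈ pathSubmodule}

theorem exists_mem_dualPaths_eqOn {T : ℝ} (hT : 0 ≤ T) {π : ℝ → V}
    (hcont : ∀ s, ContinuousOn (αv s ∘ π) (Icc 0 T)) (h0 : ∀ s, αv s (π 0) = 0) :
    ∃ π' ∈ dualPaths αv, EqOn π π' (Icc 0 T) := by
  refine ⟨fun t => π (projIcc 0 T hT t), fun s => ⟨?_, ?_⟩, fun t ht => ?_⟩
  · exact (hcont s).comp_continuous (continuous_subtype_val.comp continuous_projIcc)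
      fun t => (projIcc 0 T hT t).2
  · simp [h0]
  · simp only [projIcc_of_mem hT ht]

theorem pitman_mem_dualPaths {π : ℝ → V} (hπ : π ∈ dualPaths αv) (s : B) :
    pitman (α s) (αv s) π ∈ dualPaths αv :=
  fun s' => dual_comp_pitman_mem_pathSubmodule (hπ s') (hπ s)

theorem pitmanWord_mem_dualPaths {π : ℝ → V} (hπ : π ∈ dualPaths αv) (l : List B) :
    pitmanWord α αv l π ∈ dualPaths αv := by
  induction l with
  | nil => exact hπ
  | cons s l ih => exact pitman_mem_dualPaths ih s

variable (α αv) in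
/-- The simple Pitman transform as an element of the monoid of self-maps of `dualPaths αv`. -/
noncomputable def pitmanEnd (s : B) : Function.End (dualPaths αv) :=
  fun π => ⟨pitman (α s) (αv s) π, pitman_mem_dualPaths π.2 s⟩

theorem coe_prod_map_pitmanEnd (l : List B) (π : dualPaths αv) :
    ((l.map (pitmanEnd α αv)).prod π : ℝ → V) = pitmanWord α αv l π := by
  induction l with
  | nil => rfl
  | cons s l ih => exact congrArg (pitman (α s) (αv s)) ih

/-- Roots and coroots whose pairings realize the Coxeter matrix `M`, as in the theorem. Nothing is
required when `M s s' = 0`, which encodes `m(s, s') = ∞`, as there is then no braid relation. -/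
structure IsCoxeterRealization (M : CoxeterMatrix B) (α : B → V) (αv : B → Dual ℝ V) : Prop where
  pairing_self : ∀ s, αv s (α s) = 2
  pairing : ∀ s s', s ≠ s' → M s s' ≠ 0 →
    (M s s' = 2 ∧ αv s (α s') = 0 ∧ αv s' (α s) = 0) ∨
    (αv s (α s') < 0 ∧ αv s' (α s) < 0 ∧
      αv s (α s') * αv s' (α s) = 4 * Real.cos (Real.pi / M s s') ^ 2)

variable {M : CoxeterMatrix B}

theorem IsCoxeterRealization.pitmanWord_braidWord (h : IsCoxeterRealization M α αv)
    {i j : B} (hij : M i j ≠ 0) {π : ℝ → V} (hπ : π ∈ dualPaths αv) :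
    pitmanWord α αv (braidWord M i j) π = pitmanWord α αv (braidWord M j i) π := by
  obtain rfl | hne := eq_or_ne i j
  · rfl
  have hm : 2 ≤ M i j := by have := M.off_diagonal i j hne; lia
  rw [braidWord, braidWord, M.symmetric j i]
  obtain ⟨hm₂, hzero, hzero'⟩ | ⟨hneg, hneg', hmul⟩ := h.pairing i j hne hij
  · exact pitmanWord_alternatingWord_comm_of_eq_cos hm (h.pairing_self i) (h.pairing_self j)
      (by simp [hm₂, hzero]) (by simp [hm₂, hzero']) (hπ i) (hπ j)
  · exact pitmanWord_alternatingWord_comm_of_mul_eq_cos_sq hm hne (h.pairing_self i)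
      (h.pairing_self j) hneg hneg' hmul (hπ i) (hπ j)

variable {W : Type*} [Group W] (cs : CoxeterSystem M W)

theorem IsCoxeterRealization.pitmanWord_eq_of_isReduced (h : IsCoxeterRealization M α αv)
    {l l' : List B} (hl : cs.IsReduced l) (hl' : cs.IsReduced l')
    (hprod : cs.wordProd l = cs.wordProd l') {π : ℝ → V} (hπ : π ∈ dualPaths αv) :
    pitmanWord α αv l π = pitmanWord α αv l' π := by
  have hbraid : ∀ i j, M i j ≠ 0 → ((braidWord M i j).map (pitmanEnd α αv)).prod =
      ((braidWord M j i).map (pitmanEnd α αv)).prod := fun i j hij => by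
    funext π
    apply Subtype.ext
    rw [coe_prod_map_pitmanEnd, coe_prod_map_pitmanEnd, h.pitmanWord_braidWord hij π.2]
  simpa only [coe_prod_map_pitmanEnd] using congrArg (fun F => (F ⟨π, hπ⟩ : ℝ → V))
    (prod_map_eq_of_isReduced cs hbraid hl hl' hprod)

variable {cs}

theorem IsCoxeterRealization.pitmanWord_eq_pitman_of_isLeftDescent (h : IsCoxeterRealization M α αv)
    {l : List B} (hl : cs.IsReduced l) {π : ℝ → V} (hπ : π ∈ dualPaths αv) {s : B}
    (hs : cs.IsLeftDescent (cs.wordProd l) s) :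
    ∃ π' ∈ dualPaths αv, pitmanWord α αv l π = pitman (α s) (αv s) π' := by
  obtain ⟨l', hl', hprod⟩ := exists_isReduced_cons_of_isLeftDescent cs hs
  exact ⟨_, pitmanWord_mem_dualPaths hπ l', h.pitmanWord_eq_of_isReduced cs hl hl' hprod.symm hπ⟩

theorem IsCoxeterRealization.dual_pitmanWord_nonneg (h : IsCoxeterRealization M α αv)
    {l : List B} (hl : cs.IsReduced l) {π : ℝ → V} (hπ : π ∈ dualPaths αv) {s : B}
    (hs : cs.IsLeftDescent (cs.wordProd l) s) {t : ℝ} (ht : 0 ≤ t) :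
    0 ≤ αv s (pitmanWord α αv l π t) := by
  obtain ⟨π', hπ', heq⟩ := h.pitmanWord_eq_pitman_of_isLeftDescent hl hπ hs
  rw [heq]
  exact dual_pitman_nonneg (h.pairing_self s) (hπ' s) ht

theorem IsCoxeterRealization.pitman_pitmanWord (h : IsCoxeterRealization M α αv)
    {l : List B} (hl : cs.IsReduced l) {π : ℝ → V} (hπ : π ∈ dualPaths αv) {s : B}
    (hs : cs.IsLeftDescent (cs.wordProd l) s) :
    pitman (α s) (αv s) (pitmanWord α αv l π) = pitmanWord α αv l π := by
  obtain ⟨π', hπ', heq⟩ := h.pitmanWord_eq_pitman_of_isLeftDescent hl hπ hs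
  rw [heq, pitman_pitman (h.pairing_self s) (hπ' s)]

theorem IsCoxeterRealization.pitmanWord_pitman (h : IsCoxeterRealization M α αv)
    {l : List B} (hl : cs.IsReduced l) {π : ℝ → V} (hπ : π ∈ dualPaths αv) {s : B}
    (hs : cs.IsRightDescent (cs.wordProd l) s) :
    pitmanWord α αv l (pitman (α s) (αv s) π) = pitmanWord α αv l π := by
  obtain ⟨l', hl', hprod⟩ := exists_isReduced_concat_of_isRightDescent cs hs
  rw [h.pitmanWord_eq_of_isReduced cs hl hl' hprod.symm (pitman_mem_dualPaths hπ s),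
    h.pitmanWord_eq_of_isReduced cs hl hl' hprod.symm hπ, pitmanWord_concat, pitmanWord_concat,
    pitman_pitman (h.pairing_self s) (hπ s)]

end Pitman

theorem pitmanWord_left_right_descents_general
    {V : Type*} [AddCommGroup V] [Module ℝ V] (T : ℝ) (hT : 0 ≤ T)
    {B W : Type*} [Group W] (M : CoxeterMatrix B) (cs : CoxeterSystem M W)
    (α : B → V) (αv : B → Module.Dual ℝ V) (h : IsCoxeterRealization M α αv)
    (w : W) (l : List B) (hl : cs.wordProd l = w) (hlred : cs.IsReduced l) (π : ℝ → V)
    (hcont : ∀ s, ContinuousOn (αv s ∘ π) (Set.Icc 0 T)) (h0 : ∀ s, αv s (π 0) = 0) :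
    (∀ s : B, cs.length (cs.simple s * w) < cs.length w →
      ∀ t ∈ Set.Icc 0 T, 0 ≤ αv s (pitmanWord α αv l π t)) ∧
    (∀ s : B, cs.length (cs.simple s * w) < cs.length w →
      ∀ t ∈ Set.Icc 0 T,
        pitman (α s) (αv s) (pitmanWord α αv l π) t = pitmanWord α αv l π t) ∧
    (∀ s : B, cs.length (w * cs.simple s) < cs.length w →
      ∀ t ∈ Set.Icc 0 T,
        pitmanWord α αv l (pitman (α s) (αv s) π) t = pitmanWord α αv l π t) := by
  subst hl
  obtain ⟨π', hπ', heq⟩ := exists_mem_dualPaths_eqOn hT hcont h0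
  have hword := pitmanWord_eqOn α αv l heq
  refine ⟨fun s hs t ht => ?_, fun s hs t ht => ?_, fun s hs t ht => ?_⟩
  · rw [hword ht]
    exact h.dual_pitmanWord_nonneg hlred hπ' hs ht.1
  · rw [pitman_eqOn (α s) (αv s) hword ht, hword ht, h.pitman_pitmanWord hlred hπ' hs]
  · rw [pitmanWord_eqOn α αv l (pitman_eqOn (α s) (αv s) heq) ht, hword ht,
      h.pitmanWord_pitman hlred hπ' hs]

/-- Proposition 2.7 of Biane–Bougerol–O'Connell.  For `w ∈ W` with
`L_w = {s : ℓ(σ_s w) < ℓ(w)}` and `R_w = {s : ℓ(w σ_s) < ℓ(w)}`: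
(a) `P_w π` lies in `∩_{s ∈ L_w} H_s`; (b) `P_{α_s} ∘ P_w = P_w` for `s ∈ L_w`;
(c) `P_w ∘ P_{α_s} = P_w` for `s ∈ R_w`.  Here `P_w` is computed along any
reduced word `l` for `w`. -/
theorem pitmanWord_left_right_descents
    {V : Type*} [NormedAddCommGroup V] [NormedSpace ℝ V] [FiniteDimensional ℝ V]
    (T : ℝ) (hT : 0 < T)
    {B : Type*} [Fintype B] {W : Type*} [Group W]
    (M : CoxeterMatrix B) (cs : CoxeterSystem M W)
    (α : B → V) (αv : B → Module.Dual ℝ V)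
    (hpair : ∀ s, αv s (α s) = 2)
    (ρ : W →* (V ≃ₗ[ℝ] V)) (hρinj : Function.Injective ρ)
    (hρs : ∀ s v, ρ (cs.simple s) v = v - αv s v • α s)
    (hM : ∀ s s' : B, s ≠ s' →
      (M s s' = 2 ∧ αv s (α s') = 0 ∧ αv s' (α s) = 0) ∨
      (αv s (α s') < 0 ∧ αv s' (α s) < 0 ∧
        αv s (α s') * αv s' (α s) = 4 * Real.cos (Real.pi / (M s s' : ℝ)) ^ 2))
    (w : W) (l : List B) (hl : cs.wordProd l = w) (hlred : cs.IsReduced l)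
    (π : ℝ → V) (hcont : ContinuousOn π (Set.Icc 0 T)) (h0 : π 0 = 0) :
    (∀ s : B, cs.length (cs.simple s * w) < cs.length w →
      ∀ t ∈ Set.Icc 0 T, 0 ≤ αv s (pitmanWord α αv l π t)) ∧
    (∀ s : B, cs.length (cs.simple s * w) < cs.length w →
      ∀ t ∈ Set.Icc 0 T,
        pitman (α s) (αv s) (pitmanWord α αv l π) t = pitmanWord α αv l π t) ∧
    (∀ s : B, cs.length (w * cs.simple s) < cs.length w →
      ∀ t ∈ Set.Icc 0 T,
        pitmanWord α αv l (pitman (α s) (αv s) π) t = pitmanWord α αv l π t) :=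
  pitmanWord_left_right_descents_general T hT.le M cs α αv
    ⟨hpair, fun s s' hne _ => hM s s' hne⟩ w l hl hlred π
    (fun s => (αv s).continuous_of_finiteDimensional.comp_continuousOn hcont) (by simp [h0])
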